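/- For k ≥ 2, let G be the cycle C_{2(k+2)} on 2(k+2) vertices and H be the disjoint union of two cycles C_{k+2}. In H there exists a (k+1)-tuple with pairwise distinct entries forming a path of length k that has a local 1-neighbor with pairwise distinct entries inducing a connected subgraph, while in G no (k+1)-tuple whose entries form a path of length k has such a local 1-neighbor with pairwise distinct entries inducing a connected subgraph. -/

import Mathlib

open SimpleGraph Function

/-- A `(k+1)`-tuple forms a path of length `k`: consecutive entries adjacent, all entries
distinct. -/
def FormsPath {V : Type*} (G : SimpleGraph V) {k : ℕ} (v : Fin (k + 1) → V) : Prop :=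
  Function.Injective v ∧ ∀ i : Fin k, G.Adj (v i.castSucc) (v i.succ)

/-- A tuple induces a connected subgraph. -/
def InducesConnected {V : Type*} (G : SimpleGraph V) {m : ℕ} (v : Fin m → V) : Prop :=
  (G.induce (Set.range v)).Connected

/-!
Suppose that in a path `v₁, …, v_{k+1}` the vertex `v₁` can be replaced by a neighbor `x` so that
`x, v₂, …, v_{k+1}` are distinct and induce a connected subgraph. Then `x` is adjacent to some
`v_j` with `j ≥ 2`, and `x, v₁, …, v_j` is a cycle of length at most `k + 2`. This is impossible
in a graph of girth greater than `k + 2`, such as `C_{2(k+2)}`: a cycle in a connected 2-regular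
graph is closed under adjacency, hence passes through all vertices. Conversely, in a cycle
`c₁, …, c_{k+2}` the first entry of the path `c₁, …, c_{k+1}` can be changed to `c_{k+2}`: the new
entries are those of the path `c₂, …, c_{k+2}`.
-/

/-- `x` is a connected local `1`-neighbor of the tuple `v`: replacing the entry `v 0` by its
neighbor `x` gives a tuple with pairwise distinct entries that induces a connected subgraph. The
paper's tuples are indexed from `1`, so its `v_1` is `v 0` here. -/
def IsConnectedLocalNeighbor {V : Type*} (G : SimpleGraph V) {k : ℕ} (v : Fin (k + 1) → V)
    (x : V) : Prop :=
  G.Adj (v 0) x ∧ Injective (update v 0 x) ∧ InducesConnected G (update v 0 x)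

section Girth

variable {V : Type*} {G : SimpleGraph V}

theorem isHamiltonianCycle_of_isCycles [DecidableEq V] [LocallyFinite G] (hG : G.Preconnected)
    (hcyc : G.IsCycles) {u : V} {p : G.Walk u u} (hp : p.IsCycle) : p.IsHamiltonianCycle := by
  have mem_verts (w : V) : w ∈ p.toSubgraph.verts :=
    (hG u w).mem_subgraphVerts
      (fun v hv w ↦ (hp.adj_toSubgraph_iff_of_isCycles hcyc hv w).2) p.start_mem_verts_toSubgraph
  refine ⟨hp, hp.isPath_tail.isHamiltonian_of_mem fun w ↦ ?_⟩
  have hw : w ∈ u :: p.tail.support := by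
    rw [Walk.cons_support_tail hp.not_nil]
    exact p.mem_verts_toSubgraph.1 (mem_verts w)
  rcases List.mem_cons.1 hw with rfl | hw
  · exact p.tail.end_mem_support
  · exact hw

theorem isCycles_cycleGraph {n : ℕ} (hn : 3 ≤ n) : (cycleGraph n).IsCycles := by
  obtain ⟨n, rfl⟩ := Nat.exists_eq_add_of_le' hn
  intro v _
  rw [← coe_neighborFinset, Set.ncard_coe_finset, card_neighborFinset_eq_degree,
    cycleGraph_degree_three_le]

theorem egirth_cycleGraph {n : ℕ} (hn : 3 ≤ n) : (cycleGraph n).egirth = n := by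
  refine le_antisymm ?_ (le_egirth.2 fun u p hp ↦ ?_)
  · obtain ⟨n, rfl⟩ := Nat.exists_eq_add_of_le' hn
    simpa using egirth_le_length (cycleGraph.isCycle_cycle (n := n))
  · have hham : p.IsHamiltonianCycle :=
      isHamiltonianCycle_of_isCycles cycleGraph_preconnected (isCycles_cycleGraph hn) hp
    simp [hham.length_eq]

end Girth

section Path

variable {V : Type*} {G : SimpleGraph V} {k : ℕ}

namespace FormsPath

theorem cons {v : Fin (k + 1) → V} (hv : FormsPath G v) {x : V} (hx : G.Adj x (v 0))
    (hxv : x ∉ Set.range v) : FormsPath G (Fin.cons x v : Fin (k + 2) → V) :=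
  ⟨Fin.cons_injective_iff.2 ⟨hxv, hv.1⟩, Fin.cases hx hv.2⟩

theorem tail {v : Fin (k + 2) → V} (hv : FormsPath G v) : FormsPath G (Fin.tail v) :=
  ⟨hv.1.comp (Fin.succ_injective _), fun i ↦ hv.2 i.succ⟩

theorem init {v : Fin (k + 2) → V} (hv : FormsPath G v) : FormsPath G (Fin.init v) :=
  ⟨hv.1.comp (Fin.castSucc_injective _), fun i ↦ hv.2 i.castSucc⟩

theorem take {v : Fin (k + 1) → V} (hv : FormsPath G v) {m : ℕ} (hm : m + 1 ≤ k + 1) :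
    FormsPath G (Fin.take (m + 1) hm v) :=
  ⟨hv.1.comp (Fin.castLE_injective hm), fun i ↦ hv.2 (i.castLE (Nat.le_of_succ_le_succ hm))⟩

theorem inducesConnected {v : Fin (k + 1) → V} (hv : FormsPath G v) : InducesConnected G v := by
  have reachable (i : Fin (k + 1)) :
      (G.induce (Set.range v)).Reachable ⟨v 0, 0, rfl⟩ ⟨v i, i, rfl⟩ := by
    induction i using Fin.induction with
    | zero => exact Reachable.rfl
    | succ i ih => exact ih.trans (Adj.reachable (hv.2 i))
  refine (connected_iff_exists_forall_reachable _).2 ⟨⟨v 0, 0, rfl⟩, ?_⟩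
  rintro ⟨_, i, rfl⟩
  exact reachable i

end FormsPath

theorem cycleGraph_isContained_iff_exists_formsPath :
    cycleGraph (k + 2) ⊑ G ↔
      ∃ c : Fin (k + 2) → V, FormsPath G c ∧ G.Adj (c 0) (c (Fin.last (k + 1))) := by
  constructor
  · rintro ⟨f⟩
    refine ⟨f, ⟨f.injective, fun i ↦ f.toHom.map_adj ?_⟩, f.toHom.map_adj ?_⟩
    · exact pathGraph_le_cycleGraph (pathGraph_adj.2 (Or.inl (by simp)))
    · simp [cycleGraph_adj]
  · rintro ⟨c, hc, hclosed⟩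
    have adj_add_one (i : Fin (k + 2)) : G.Adj (c i) (c (i + 1)) := by
      induction i using Fin.lastCases with
      | last => rw [Fin.last_add_one]; exact hclosed.symm
      | cast i => rw [Fin.coeSucc_eq_succ]; exact hc.2 i
    refine ⟨⟨⟨c, fun {i j} hij ↦ ?_⟩, hc.1⟩⟩
    rcases cycleGraph_adj.1 hij with h | h
    · rw [sub_eq_iff_eq_add.1 h, add_comm]
      exact (adj_add_one j).symm
    · rw [sub_eq_iff_eq_add.1 h, add_comm]
      exact adj_add_one i

end Path

section LocalNeighbor

variable {V : Type*} {G : SimpleGraph V} {k : ℕ}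

theorem update_init_comp_finRotate (c : Fin (k + 2) → V) :
    update (Fin.init c : Fin (k + 1) → V) 0 (c (Fin.last (k + 1))) ∘ finRotate (k + 1) =
      Fin.tail c := by
  ext i
  rw [comp_apply, finRotate_apply]
  induction i using Fin.lastCases with
  | last => rw [Fin.last_add_one, update_self, Fin.tail, Fin.succ_last]
  | cast i =>
    rw [Fin.coeSucc_eq_succ, update_of_ne i.succ_ne_zero, Fin.init, Fin.tail, Fin.castSucc_succ]

theorem FormsPath.isConnectedLocalNeighbor_init {c : Fin (k + 2) → V} (hc : FormsPath G c)
    (hclosed : G.Adj (c 0) (c (Fin.last (k + 1)))) :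
    IsConnectedLocalNeighbor G (Fin.init c : Fin (k + 1) → V) (c (Fin.last (k + 1))) := by
  have htail : FormsPath G (update (Fin.init c : Fin (k + 1) → V) 0 (c (Fin.last (k + 1))) ∘
      finRotate (k + 1)) := by
    rw [update_init_comp_finRotate]
    exact hc.tail
  refine ⟨hclosed, (Equiv.injective_comp _ _).1 htail.1, ?_⟩
  rw [InducesConnected, ← EquivLike.range_comp _ (finRotate (k + 1))]
  exact htail.inducesConnected

namespace IsConnectedLocalNeighbor

variable {v : Fin (k + 1) → V} {x : V}

theorem notMem_range (hx : IsConnectedLocalNeighbor G v x) : x ∉ Set.range v := by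
  rintro ⟨i, rfl⟩
  obtain ⟨hadj, hinj, -⟩ := hx
  have hi : i ≠ 0 := by
    rintro rfl
    exact hadj.ne rfl
  exact hi (hinj (by rw [update_self, update_of_ne hi]))

theorem exists_adj (hk : 1 ≤ k) (hx : IsConnectedLocalNeighbor G v x) :
    ∃ j : Fin (k + 1), j ≠ 0 ∧ G.Adj x (v j) := by
  obtain ⟨-, hinj, hconn⟩ := hx
  have : Nontrivial (Fin (k + 1)) := Fin.nontrivial_iff_two_le.2 (Nat.succ_le_succ hk)
  have : Nontrivial (Set.range (update v 0 x)) :=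
    (Equiv.ofInjective _ hinj).symm.nontrivial
  obtain ⟨⟨_, j, rfl⟩, hadj⟩ :=
    hconn.preconnected.exists_adj_of_nontrivial ⟨x, 0, update_self ..⟩
  replace hadj : G.Adj x (update v 0 x j) := hadj
  have hj : j ≠ 0 := by
    rintro rfl
    rw [update_self] at hadj
    exact hadj.ne rfl
  exact ⟨j, hj, by rwa [update_of_ne hj] at hadj⟩

theorem egirth_le (hk : 1 ≤ k) (hx : IsConnectedLocalNeighbor G v x) (hv : FormsPath G v) :
    G.egirth ≤ k + 2 := by
  obtain ⟨j, hj, hxj⟩ := hx.exists_adj hk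
  have hpath : FormsPath G (Fin.cons x (Fin.take (j + 1) j.isLt v) : Fin (j + 2) → V) :=
    (hv.take j.isLt).cons hx.1.symm fun ⟨i, hi⟩ ↦ hx.notMem_range ⟨_, hi⟩
  have hcycle : cycleGraph (j + 2) ⊑ G :=
    cycleGraph_isContained_iff_exists_formsPath.2 ⟨_, hpath, hxj⟩
  have hlength : 3 ≤ (j : ℕ) + 2 := Nat.add_le_add_right (Fin.pos_iff_ne_zero.2 hj) 2
  calc G.egirth ≤ (cycleGraph (j + 2)).egirth := hcycle.egirth_le
    _ = (j + 2 : ℕ) := egirth_cycleGraph hlength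
    _ ≤ k + 2 := by exact_mod_cast Nat.add_le_add_right j.is_le 2

end IsConnectedLocalNeighbor

end LocalNeighbor

theorem cycle_vs_two_cycles_local_one_neighbor_general {V W : Type*} {G : SimpleGraph V}
    {H : SimpleGraph W} {k : ℕ} (hk : 1 ≤ k) (hG : k + 2 < G.egirth)
    (hH : cycleGraph (k + 2) ⊑ H) :
    (∃ v : Fin (k + 1) → W, FormsPath H v ∧ ∃ x, IsConnectedLocalNeighbor H v x) ∧
      ∀ v : Fin (k + 1) → V, FormsPath G v → ¬ ∃ x, IsConnectedLocalNeighbor G v x := by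
  constructor
  · obtain ⟨c, hc, hclosed⟩ := cycleGraph_isContained_iff_exists_formsPath.1 hH
    exact ⟨_, hc.init, _, hc.isConnectedLocalNeighbor_init hclosed⟩
  · rintro v hv ⟨x, hx⟩
    exact hG.not_ge (hx.egirth_le hk hv)

/-- For `k ≥ 2`, let `G = C_{2(k+2)}` and `H = C_{k+2} ⊔ C_{k+2}`.
In `H` there is a `(k+1)`-tuple with pairwise distinct entries forming a path of length
`k` that has a local `1`-neighbor with pairwise distinct entries inducing a connected
subgraph, while in `G` no `(k+1)`-tuple forming a path of length `k` has such a local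
`1`-neighbor. -/
theorem cycle_vs_two_cycles_local_one_neighbor (k : ℕ) (hk : 2 ≤ k) :
    (∃ v : Fin (k + 1) → (Fin (k + 2) ⊕ Fin (k + 2)),
        FormsPath (cycleGraph (k + 2) ⊕g cycleGraph (k + 2)) v ∧
        ∃ x, (cycleGraph (k + 2) ⊕g cycleGraph (k + 2)).Adj (v 0) x ∧
          Function.Injective (Function.update v 0 x) ∧
          InducesConnected (cycleGraph (k + 2) ⊕g cycleGraph (k + 2))
            (Function.update v 0 x)) ∧
    (∀ v : Fin (k + 1) → Fin (2 * (k + 2)),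
        FormsPath (cycleGraph (2 * (k + 2))) v →
        ¬ ∃ x, (cycleGraph (2 * (k + 2))).Adj (v 0) x ∧
            Function.Injective (Function.update v 0 x) ∧
            InducesConnected (cycleGraph (2 * (k + 2))) (Function.update v 0 x)) := by
  refine cycle_vs_two_cycles_local_one_neighbor_general (by lia) ?_ ⟨Embedding.sumInl.toCopy⟩
  rw [egirth_cycleGraph (by lia)]
  exact_mod_cast (by lia : k + 2 < 2 * (k + 2))
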